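/- Bias bound for the one-step absolute error estimator: for any bounded measurable τ̂ : 𝒳 → ℝ with |μ̃₁(x) − μ̃₀(x) − τ̂(x)| ≤ B̃ for all x, writing Δ := μ₁ − μ₀, Δ̃ := μ̃₁ − μ̃₀, and R̃ := W(Y − μ̃₁(X))/ẽ(X) − (1−W)(Y − μ̃₀(X))/(1−ẽ(X)), one has | E[(Δ̃(X) − τ̂(X))² + 2(Δ̃(X) − τ̂(X))·R̃] − φ(τ̂) | ≤ E[(Δ(X) − Δ̃(X))²] + (2B̃/η′)·( E[|ẽ(X) − e(X)|·|μ̃₁(X) − μ₁(X)|] + E[|ẽ(X) − e(X)|·|μ̃₀(X) − μ₀(X)|] ). -/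

import Mathlib

open MeasureTheory ProbabilityTheory


def BdM {𝒳 : Type*} [MeasurableSpace 𝒳] (g : 𝒳 → ℝ) : Prop :=
  Measurable g ∧ ∃ C, ∀ x, |g x| ≤ C

section
variable {𝒳 : Type*} [MeasurableSpace 𝒳] {f g : 𝒳 → ℝ}

lemma BdM.mul (hf : BdM f) (hg : BdM g) : BdM (fun x => f x * g x) := by
  obtain ⟨mf, C, hC⟩ := hf
  obtain ⟨mg, D, hD⟩ := hg
  refine ⟨mf.mul mg, C * D, fun x => ?_⟩
  rw [abs_mul]
  exact mul_le_mul (hC x) (hD x) (abs_nonneg _) ((abs_nonneg _).trans (hC x))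

lemma BdM.add (hf : BdM f) (hg : BdM g) : BdM (fun x => f x + g x) := by
  obtain ⟨mf, C, hC⟩ := hf
  obtain ⟨mg, D, hD⟩ := hg
  exact ⟨mf.add mg, C + D, fun x => (abs_add_le _ _).trans (add_le_add (hC x) (hD x))⟩

lemma BdM.const (c : ℝ) : BdM (fun _ : 𝒳 => c) :=
  ⟨measurable_const, |c|, fun _ => le_rfl⟩

lemma BdM.sub (hf : BdM f) (hg : BdM g) : BdM (fun x => f x - g x) := by
  obtain ⟨mf, C, hC⟩ := hf
  obtain ⟨mg, D, hD⟩ := hg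
  exact ⟨mf.sub mg, C + D, fun x => (abs_sub _ _).trans (add_le_add (hC x) (hD x))⟩

lemma BdM.abs (hf : BdM f) : BdM (fun x => |f x|) := by
  obtain ⟨mf, C, hC⟩ := hf
  exact ⟨mf.abs, C, fun x => by simpa using hC x⟩

lemma BdM.inv (hf : Measurable f) {c : ℝ} (hc : 0 < c) (h : ∀ x, c ≤ f x) :
    BdM (fun x => (f x)⁻¹) := by
  refine ⟨hf.inv, c⁻¹, fun x => ?_⟩
  rw [abs_of_nonneg (inv_nonneg.2 (hc.le.trans (h x)))]
  exact inv_anti₀ hc (h x)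

end

lemma BdM.integrable {Ω 𝒳 : Type*} [MeasurableSpace Ω] [MeasurableSpace 𝒳]
    {P : Measure Ω} [IsProbabilityMeasure P] {X : Ω → 𝒳} (hX : Measurable X)
    {g : 𝒳 → ℝ} (hg : BdM g) : Integrable (fun ω => g (X ω)) P := by
  obtain ⟨mg, C, hC⟩ := hg
  exact Integrable.of_bound (mg.comp hX).aestronglyMeasurable C
    (Filter.Eventually.of_forall fun ω => hC _)

lemma BdM.integrable_mul {Ω 𝒳 : Type*} [MeasurableSpace Ω] [MeasurableSpace 𝒳]
    {P : Measure Ω} [IsProbabilityMeasure P] {X : Ω → 𝒳} (hX : Measurable X)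
    {g : 𝒳 → ℝ} (hg : BdM g) {Z : Ω → ℝ} (hZ : Integrable Z P) :
    Integrable (fun ω => g (X ω) * Z ω) P := by
  obtain ⟨mg, C, hC⟩ := hg
  exact hZ.bdd_mul (c := C) (mg.comp hX).aestronglyMeasurable
    (Filter.Eventually.of_forall fun ω => hC _)

lemma BdM.integral_mul {Ω 𝒳 : Type*} [MeasurableSpace Ω] [m𝒳 : MeasurableSpace 𝒳]
    {P : Measure Ω} [IsProbabilityMeasure P] {X : Ω → 𝒳} (hX : Measurable X)
    {g : 𝒳 → ℝ} (hg : BdM g) {Z : Ω → ℝ} (hZ : Integrable Z P) {f : 𝒳 → ℝ}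
    (h : P[Z | m𝒳.comap X] =ᵐ[P] fun ω => f (X ω)) :
    ∫ ω, g (X ω) * Z ω ∂P = ∫ ω, g (X ω) * f (X ω) ∂P := by
  have hm : m𝒳.comap X ≤ _ := hX.comap_le
  have hs : StronglyMeasurable[m𝒳.comap X] (fun ω => g (X ω)) :=
    (hg.1.comp (comap_measurable X)).stronglyMeasurable
  rw [← integral_condExp hm]
  refine integral_congr_ae ?_
  filter_upwards [condExp_mul_of_stronglyMeasurable_left hs (hg.integrable_mul hX hZ) hZ, h]
    with ω h1 h2
  have h1' : (P[fun ω => g (X ω) * Z ω | m𝒳.comap X]) ω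
    = g (X ω) * (P[Z | m𝒳.comap X]) ω := h1
  rw [h1', h2]

/-- Bias bound for the one-step absolute error estimator: for `|Δ̃ − τ̂| ≤ B̃`,
`|E[(Δ̃(X) − τ̂(X))² + 2(Δ̃(X) − τ̂(X))·R̃] − φ(τ̂)|
  ≤ E[(Δ(X) − Δ̃(X))²]
    + (2B̃/η′)·(E[|ẽ(X) − e(X)|·|μ̃₁(X) − μ₁(X)|] + E[|ẽ(X) − e(X)|·|μ̃₀(X) − μ₀(X)|])`. -/
theorem absolute_error_one_step_bias_bound
    {Ω 𝒳 : Type*} [MeasurableSpace Ω] [m𝒳 : MeasurableSpace 𝒳]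
    (P : Measure Ω) [IsProbabilityMeasure P]
    (X : Ω → 𝒳) (W Y : Ω → ℝ)
    (hX : Measurable X) (hW : Measurable W) (hY : Measurable Y)
    (hW01 : ∀ᵐ ω ∂P, W ω = 0 ∨ W ω = 1)
    (M : ℝ) (hM : 0 < M) (hYb : ∀ᵐ ω ∂P, |Y ω| ≤ M)
    (e μ₀ μ₁ : 𝒳 → ℝ)
    (he : Measurable e) (hμ₀ : Measurable μ₀) (hμ₁ : Measurable μ₁)
    (C₀ C₁ : ℝ) (hμ₀b : ∀ x, |μ₀ x| ≤ C₀) (hμ₁b : ∀ x, |μ₁ x| ≤ C₁)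
    (η : ℝ) (hη₀ : 0 < η) (hη₁ : η < 1/2)
    (heb : ∀ x, η ≤ e x ∧ e x ≤ 1 - η)
    (hce : P[W | m𝒳.comap X] =ᵐ[P] fun ω => e (X ω))
    (hc1 : P[fun ω => W ω * Y ω | m𝒳.comap X] =ᵐ[P] fun ω => e (X ω) * μ₁ (X ω))
    (hc0 : P[fun ω => (1 - W ω) * Y ω | m𝒳.comap X]
        =ᵐ[P] fun ω => (1 - e (X ω)) * μ₀ (X ω))
    (μt₀ μt₁ et : 𝒳 → ℝ)
    (hμt₀ : Measurable μt₀) (hμt₁ : Measurable μt₁) (het : Measurable et)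
    (Ct₀ Ct₁ : ℝ) (hμt₀b : ∀ x, |μt₀ x| ≤ Ct₀) (hμt₁b : ∀ x, |μt₁ x| ≤ Ct₁)
    (η' : ℝ) (hη'₀ : 0 < η') (hη'₁ : η' < 1/2)
    (hetb : ∀ x, η' ≤ et x ∧ et x ≤ 1 - η') :
    ∀ (τhat : 𝒳 → ℝ) (B Bt : ℝ), Measurable τhat → (∀ x, |τhat x| ≤ B) →
      (∀ x, |μt₁ x - μt₀ x - τhat x| ≤ Bt) →
      |(∫ ω, (((μt₁ (X ω) - μt₀ (X ω)) - τhat (X ω)) ^ 2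
          + 2 * ((μt₁ (X ω) - μt₀ (X ω)) - τhat (X ω))
            * (W ω * (Y ω - μt₁ (X ω)) / et (X ω)
              - (1 - W ω) * (Y ω - μt₀ (X ω)) / (1 - et (X ω)))) ∂P)
        - (∫ ω, (τhat (X ω) - (μ₁ (X ω) - μ₀ (X ω))) ^ 2 ∂P)|
        ≤ (∫ ω, ((μ₁ (X ω) - μ₀ (X ω)) - (μt₁ (X ω) - μt₀ (X ω))) ^ 2 ∂P)
          + (2 * Bt / η') * ((∫ ω, |et (X ω) - e (X ω)| * |μt₁ (X ω) - μ₁ (X ω)| ∂P)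
              + ∫ ω, |et (X ω) - e (X ω)| * |μt₀ (X ω) - μ₀ (X ω)| ∂P) := by
  intro τ B Bt hτ hτb hBt
  have bτ : BdM τ := ⟨hτ, B, hτb⟩
  have b0 : BdM μ₀ := ⟨hμ₀, C₀, hμ₀b⟩
  have b1 : BdM μ₁ := ⟨hμ₁, C₁, hμ₁b⟩
  have bt0 : BdM μt₀ := ⟨hμt₀, Ct₀, hμt₀b⟩
  have bt1 : BdM μt₁ := ⟨hμt₁, Ct₁, hμt₁b⟩
  have be : BdM e := ⟨he, 1, fun x => abs_le.2 ⟨by linarith [(heb x).1], by linarith [(heb x).2]⟩⟩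
  have bet : BdM et :=
    ⟨het, 1, fun x => abs_le.2 ⟨by linarith [(hetb x).1], by linarith [(hetb x).2]⟩⟩
  have bi : BdM (fun x => (et x)⁻¹) := BdM.inv het hη'₀ fun x => (hetb x).1
  have bj : BdM (fun x => (1 - et x)⁻¹) :=
    BdM.inv (measurable_const.sub het) hη'₀ fun x => by linarith [(hetb x).2]
  have bD : BdM (fun x => (μt₁ x - μt₀ x) - τ x) := (bt1.sub bt0).sub bτ
  have b2D : BdM (fun x => 2 * ((μt₁ x - μt₀ x) - τ x)) := (BdM.const 2).mul bD
  have iW : Integrable W P := by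
    refine Integrable.of_bound hW.aestronglyMeasurable 1 ?_
    filter_upwards [hW01] with ω h
    rcases h with h | h <;> simp [h]
  have iY : Integrable Y P := Integrable.of_bound hY.aestronglyMeasurable M hYb
  have iWY : Integrable (fun ω => W ω * Y ω) P := by
    refine iY.bdd_mul (c := 1) hW.aestronglyMeasurable ?_
    filter_upwards [hW01] with ω h
    rcases h with h | h <;> simp [h]
  have iVY : Integrable (fun ω => (1 - W ω) * Y ω) P := by
    refine (iY.sub iWY).congr (Filter.Eventually.of_forall fun ω => ?_)
    simp only [Pi.sub_apply]; ring
  have ba1 := b2D.mul bi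
  have ba3 := b2D.mul bj
  have ba4 := ba3.mul bt0
  have ba2 := (ba1.mul bt1).add ba4
  have ba0 := (bD.mul bD).add ba4
  have key : ∫ ω, (((μt₁ (X ω) - μt₀ (X ω)) - τ (X ω)) ^ 2
          + 2 * ((μt₁ (X ω) - μt₀ (X ω)) - τ (X ω))
            * (W ω * (Y ω - μt₁ (X ω)) / et (X ω)
              - (1 - W ω) * (Y ω - μt₀ (X ω)) / (1 - et (X ω)))) ∂P
      = ∫ ω, (((μt₁ (X ω) - μt₀ (X ω)) - τ (X ω)) ^ 2
          + 2 * ((μt₁ (X ω) - μt₀ (X ω)) - τ (X ω))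
            * (e (X ω) * (μ₁ (X ω) - μt₁ (X ω)) / et (X ω)
              - (1 - e (X ω)) * (μ₀ (X ω) - μt₀ (X ω)) / (1 - et (X ω)))) ∂P := by
    have e1 := ba1.integral_mul (f := fun x => e x * μ₁ x) hX iWY hc1
    have e2 := ba2.integral_mul (f := e) hX iW hce
    have e3 := ba3.integral_mul (f := fun x => (1 - e x) * μ₀ x) hX iVY hc0
    have i0 := ba0.integrable (P := P) hX
    have i1 := ba1.integrable_mul hX iWY
    have i2 := ba2.integrable_mul hX iW
    have i3 := ba3.integrable_mul hX iVY
    have j1 := (ba1.mul (be.mul b1)).integrable (P := P) hX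
    have j2 := (ba2.mul be).integrable (P := P) hX
    have j3 := (ba3.mul (((BdM.const 1).sub be).mul b0)).integrable (P := P) hX
    have l := integral_sub ((i0.add i1).sub i2) i3
    have l2 := integral_sub (i0.add i1) i2
    have l3 := integral_add i0 i1
    have r := integral_sub ((i0.add j1).sub j2) j3
    have r2 := integral_sub (i0.add j1) j2
    have r3 := integral_add i0 j1
    simp only [Pi.add_apply, Pi.sub_apply] at l l2 l3 r r2 r3
    have fin := l.trans (Eq.trans (by rw [l2, l3, r2, r3, e1, e2, e3]) r.symm)
    refine Eq.trans (integral_congr_ae (Filter.Eventually.of_forall fun ω => ?_))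
      (fin.trans (integral_congr_ae (Filter.Eventually.of_forall fun ω => ?_)))
    · simp only [div_eq_mul_inv]; ring
    · simp only [div_eq_mul_inv]; ring
  rw [key]
  have bd1 : BdM (fun x => |et x - e x| * |μt₁ x - μ₁ x|) := (bet.sub be).abs.mul (bt1.sub b1).abs
  have bd0 : BdM (fun x => |et x - e x| * |μt₀ x - μ₀ x|) := (bet.sub be).abs.mul (bt0.sub b0).abs
  have bsq : BdM (fun x => ((μ₁ x - μ₀ x) - (μt₁ x - μt₀ x)) ^ 2) := by
    simp only [pow_two]
    exact ((b1.sub b0).sub (bt1.sub bt0)).mul ((b1.sub b0).sub (bt1.sub bt0))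
  have bph : BdM (fun x => (τ x - (μ₁ x - μ₀ x)) ^ 2) := by
    simp only [pow_two]
    exact (bτ.sub (b1.sub b0)).mul (bτ.sub (b1.sub b0))
  have bL : BdM (fun x => ((μt₁ x - μt₀ x) - τ x) ^ 2 + 2 * ((μt₁ x - μt₀ x) - τ x)
            * (e x * (μ₁ x - μt₁ x) / et x - (1 - e x) * (μ₀ x - μt₀ x) / (1 - et x))) := by
    simp only [pow_two, div_eq_mul_inv]
    exact (bD.mul bD).add (b2D.mul (((be.mul (b1.sub bt1)).mul bi).sub
      ((((BdM.const 1).sub be).mul (b0.sub bt0)).mul bj)))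
  rw [← integral_sub (bL.integrable hX) (bph.integrable hX),
    ← integral_add (bd1.integrable hX) (bd0.integrable hX), ← integral_const_mul,
    ← integral_add (bsq.integrable hX) (((bd1.add bd0).integrable hX).const_mul _)]
  refine (abs_integral_le_integral_abs).trans (integral_mono
    ((bL.sub bph).abs.integrable hX)
    ((bsq.integrable hX).add (((bd1.add bd0).integrable hX).const_mul _)) fun ω => ?_)
  simp only [Pi.add_apply]
  generalize X ω = x
  have hp : 0 < et x := hη'₀.trans_le (hetb x).1
  have hq' : η' ≤ 1 - et x := by linarith [(hetb x).2]
  have hq : 0 < 1 - et x := hη'₀.trans_le hq'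
  have hB0 : 0 ≤ Bt := (abs_nonneg _).trans (hBt x)
  have id1 : ((μt₁ x - μt₀ x) - τ x) ^ 2 + 2 * ((μt₁ x - μt₀ x) - τ x)
            * (e x * (μ₁ x - μt₁ x) / et x - (1 - e x) * (μ₀ x - μt₀ x) / (1 - et x))
          - (τ x - (μ₁ x - μ₀ x)) ^ 2
      = 2 * ((μt₁ x - μt₀ x) - τ x) * ((et x - e x) * (μt₁ x - μ₁ x) / et x
          + (et x - e x) * (μt₀ x - μ₀ x) / (1 - et x))
        - ((μ₁ x - μ₀ x) - (μt₁ x - μt₀ x)) ^ 2 := by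
    have := hp.ne'
    have := hq.ne'
    field_simp
    ring
  rw [id1]
  refine (abs_sub _ _).trans ?_
  rw [add_comm, abs_of_nonneg (sq_nonneg ((μ₁ x - μ₀ x) - (μt₁ x - μt₀ x)))]
  refine add_le_add le_rfl ?_
  rw [abs_mul, abs_mul, abs_two]
  have t1 : |(et x - e x) * (μt₁ x - μ₁ x) / et x| ≤ |et x - e x| * |μt₁ x - μ₁ x| / η' := by
    rw [abs_div, abs_mul, abs_of_pos hp]
    exact div_le_div_of_nonneg_left (by positivity) hη'₀ (hetb x).1
  have t0 : |(et x - e x) * (μt₀ x - μ₀ x) / (1 - et x)|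
      ≤ |et x - e x| * |μt₀ x - μ₀ x| / η' := by
    rw [abs_div, abs_mul, abs_of_pos hq]
    exact div_le_div_of_nonneg_left (by positivity) hη'₀ hq'
  calc _ ≤ 2 * Bt * (|et x - e x| * |μt₁ x - μ₁ x| / η' + |et x - e x| * |μt₀ x - μ₀ x| / η') := by
        refine mul_le_mul (by linarith [hBt x]) ((abs_add_le _ _).trans (add_le_add t1 t0))
          (abs_nonneg _) (by linarith)
    _ = _ := by ring
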